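/- Let k be a field and let D be a finite-dimensional associative division algebra over k whose center is exactly k and whose dimension over k is 9 (i.e., D is a central division algebra of degree 3 over k). Then D contains a cyclic cubic subfield: there exists a k-subalgebra L of D that is commutative and a field, such that L has dimension 3 over k and the field extension L/k is Galois with cyclic Galois group (necessarily of order 3). -/

import Mathlib

/-!
A noncentral separable `x` has a cubic minimal polynomial, which splits over `D` as
`(t - z) * (t - y) * (t - x)` with `t` a central variable and `y ≠ x` conjugate to `x`.
If `x` and `y` do not commute, then `a = x * y - y * x` conjugates `x` to `y`, `y` to `z` and `z`
to `x`, so `a ^ 3` commutes with `x` and `y` and is central. Splitting `t ^ 3 - a ^ 3` in the same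
way gives a root `y` with `a ^ 2 + a * y + y ^ 2 = 0`. If `y` does not commute with `a`, then
`y⁻¹ * a` and `a * y⁻¹` are commuting distinct conjugates; if `y` commutes with `a` but differs
from it, `a` and `y` are. Finally `y = a` forces characteristic 3, where `v ↦ a * v - v * a` is
nilpotent and provides some `t` conjugate to `t + 1`. In all cases two distinct commuting conjugates
generate the same cubic subfield, and the conjugation restricts to a nontrivial automorphism of it,
which makes that subfield cyclic.
-/

open Polynomial

section CommutatorRotation

variable {R : Type*} [Ring R] {x y z : R}

theorem semiconjBy_commutator_of_mem_center (hsum : x + y + z ∈ Set.center R)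
    (hprod : y * x + z * x + z * y ∈ Set.center R) :
    SemiconjBy (x * y - y * x) x y ∧ SemiconjBy (x * y - y * x) y z ∧
      SemiconjBy (x * y - y * x) z x := by
  rw [Semigroup.mem_center_iff] at hsum hprod
  have hyz : SemiconjBy (x * y - y * x) y z := by
    change (x * y - y * x) * y = z * (x * y - y * x)
    linear_combination (norm := noncomm_ring) hsum x * (x + y) - hprod x
  have hzx : SemiconjBy (x * y - y * x) z x := by
    change (x * y - y * x) * z = x * (x * y - y * x)
    linear_combination (norm := noncomm_ring)
      hprod z - z * hsum z + x * hsum y + hprod x - hsum x * x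
  have hxy : SemiconjBy (x * y - y * x) x y := by
    change (x * y - y * x) * x = y * (x * y - y * x)
    linear_combination (norm := noncomm_ring) hsum (x * y - y * x) - hyz.eq - hzx.eq
  exact ⟨hxy, hyz, hzx⟩

theorem commute_commutator_pow_three (hsum : x + y + z ∈ Set.center R)
    (hprod : y * x + z * x + z * y ∈ Set.center R) :
    Commute ((x * y - y * x) ^ 3) x ∧ Commute ((x * y - y * x) ^ 3) y := by
  obtain ⟨hxy, hyz, hzx⟩ := semiconjBy_commutator_of_mem_center hsum hprod
  rw [pow_three]
  exact ⟨hzx.mul_left (hyz.mul_left hxy), hxy.mul_left (hzx.mul_left hyz)⟩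

end CommutatorRotation

theorem isConj_of_semiconjBy {G₀ : Type*} [GroupWithZero G₀] {a x y : G₀} (ha : a ≠ 0)
    (h : SemiconjBy a x y) : IsConj x y :=
  ⟨Units.mk0 a ha, h⟩

/-- `M` contains two distinct conjugate elements that commute. In a division algebra of degree `p`
this is the source of a cyclic maximal subfield: conjugation restricts to a nontrivial automorphism
of the subfield generated by either element. -/
def HasCommutingConjugates (M : Type*) [Monoid M] : Prop :=
  ∃ x y : M, IsConj x y ∧ Commute x y ∧ x ≠ y

section CommutingConjugates

variable {D : Type*} [DivisionRing D]

theorem exists_isConj_cubic_factorization {x s c n : D} (hx : x ∉ Set.center D)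
    (hs : s ∈ Set.center D) (hc : c ∈ Set.center D) (hn : n ∈ Set.center D)
    (hroot : x ^ 3 - s * x ^ 2 + c * x - n = 0) :
    ∃ y z, IsConj x y ∧ x + y + z = s ∧ y * x + z * x + z * y = c := by
  rw [Semigroup.mem_center_iff] at hs hc hn hx
  push Not at hx
  obtain ⟨e, hex⟩ := hx
  have he : e ≠ 0 := by rintro rfl; simp at hex
  obtain ⟨b, hb⟩ : ∃ b, SemiconjBy e x b := ⟨e * x * e⁻¹, by simp [SemiconjBy, mul_assoc, he]⟩
  have hbroot : b ^ 3 - s * b ^ 2 + c * b - n = 0 := by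
    have hP : SemiconjBy e (x ^ 3 - s * x ^ 2 + c * x - n) (b ^ 3 - s * b ^ 2 + c * b - n) :=
      (((hb.pow_right 3).sub_right (.mul_right (hs e) (hb.pow_right 2))).add_right
        (.mul_right (hc e) hb)).sub_right (hn e)
    simpa [SemiconjBy, hroot, he] using hP
  have hbx : b - x ≠ 0 := fun h => hex (by rw [hb.eq, sub_eq_zero.mp h])
  obtain ⟨y, hy⟩ : ∃ y, SemiconjBy (b - x) b y :=
    ⟨(b - x) * b * (b - x)⁻¹, by simp [SemiconjBy, mul_assoc, hbx]⟩
  refine ⟨y, s - x - y, (isConj_of_semiconjBy he hb).trans (isConj_of_semiconjBy hbx hy),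
    by abel, ?_⟩
  -- `(x + y) * (b - x)` and `(x ^ 2 + x * y + y ^ 2) * (b - x)` telescope to `b ^ 2 - x ^ 2` and
  -- `b ^ 3 - x ^ 3`, because `y * (b - x) = (b - x) * b`.
  have hprod : (y * x + (s - x - y) * x + (s - x - y) * y - c) * (b - x) = 0 := by
    linear_combination (norm := noncomm_ring) hy.eq * b - (s - x - y) * hy.eq + hroot - hbroot
  exact sub_eq_zero.mp ((mul_eq_zero.mp hprod).resolve_right hbx)

theorem exists_apply_ne_zero_apply_apply_eq_zero {R M : Type*} [Semiring R] [AddCommMonoid M]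
    [Module R M] {f : Module.End R M} (hf : IsNilpotent f) (hf0 : f ≠ 0) :
    ∃ v, f v ≠ 0 ∧ f (f v) = 0 := by
  obtain ⟨w, hw⟩ := DFunLike.ne_iff.mp hf0
  by_contra! hker
  have hpow : ∀ n, (f ^ (n + 1)) w ≠ 0 := by
    intro n
    induction n with
    | zero => simpa using hw
    | succ n ih =>
      rw [pow_succ', Module.End.mul_apply] at ih ⊢
      rw [pow_succ', Module.End.mul_apply]
      exact hker _ ih
  obtain ⟨n, hn⟩ := hf
  exact hpow n (by simp [pow_succ', hn])

theorem HasCommutingConjugates.of_commute_commutator {a v : D} (hv : ¬Commute a v)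
    (ha : Commute a (a * v - v * a)) : HasCommutingConjugates D := by
  obtain ⟨w, hw⟩ : ∃ w, w = a * v - v * a := ⟨_, rfl⟩
  rw [← hw] at ha
  have ha0 : a ≠ 0 := by rintro rfl; exact hv (.zero_left v)
  have hw0 : w ≠ 0 := hw ▸ sub_ne_zero.mpr hv
  -- `a * t - t * a = a`, so conjugation by `a` sends `t = v * w⁻¹ * a` to `t + 1`.
  have hconj : SemiconjBy a (v * w⁻¹ * a) (v * w⁻¹ * a + 1) := by
    have hav : a * v = w + v * a := by rw [hw, sub_add_cancel]
    calc a * (v * w⁻¹ * a) = a * v * w⁻¹ * a := by simp only [mul_assoc]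
      _ = w * w⁻¹ * a + v * (a * w⁻¹) * a := by rw [hav]; noncomm_ring
      _ = (v * w⁻¹ * a + 1) * a := by
        rw [mul_inv_cancel₀ hw0, ha.inv_right₀.eq]; noncomm_ring
  exact ⟨_, _, isConj_of_semiconjBy ha0 hconj, (Commute.refl _).add_right (.one_right _), by simp⟩

theorem HasCommutingConjugates.of_pow_char_mem_center (p : ℕ) [Fact p.Prime] [CharP D p] {a : D}
    (ha : a ∉ Set.center D) (hp : a ^ p ∈ Set.center D) : HasCommutingConjugates D := by
  let δ : Module.End (Subring.center D) D := .mulLeft _ a - .mulRight _ a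
  have hδ : δ ^ p = 0 := by
    rw [sub_pow_char_of_commute _ (LinearMap.commute_mulLeft_right a a), LinearMap.pow_mulLeft,
      LinearMap.pow_mulRight, sub_eq_zero]
    ext v
    exact (Semigroup.mem_center_iff.mp hp v).symm
  have hδ0 : δ ≠ 0 := fun h0 => ha <| Semigroup.mem_center_iff.mpr fun v =>
    (sub_eq_zero.mp (LinearMap.congr_fun h0 v)).symm
  obtain ⟨v, hv, hv'⟩ := exists_apply_ne_zero_apply_apply_eq_zero ⟨p, hδ⟩ hδ0
  exact .of_commute_commutator (sub_ne_zero.mp hv) (sub_eq_zero.mp hv')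

theorem HasCommutingConjugates.of_sq_add_mul_add_sq_eq_zero {x y : D} (hxy : ¬Commute x y)
    (h : x ^ 2 + x * y + y ^ 2 = 0) : HasCommutingConjugates D := by
  have hx : x ≠ 0 := by rintro rfl; exact hxy (.zero_left y)
  have hy : y ≠ 0 := by rintro rfl; exact hxy (.zero_right x)
  have hinv : (y⁻¹ * x)⁻¹ = -1 - x * y⁻¹ := by
    rw [mul_inv_rev, inv_inv, inv_mul_eq_iff_eq_mul₀ hx]
    refine mul_right_cancel₀ hy ?_
    rw [mul_assoc x, sub_mul, inv_mul_cancel_right₀ hy]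
    linear_combination (norm := noncomm_ring) h
  have hcomm : Commute (y⁻¹ * x) (x * y⁻¹) := by
    rw [← Commute.inv_left_iff₀, hinv]
    exact (Commute.neg_one_left _).sub_left (.refl _)
  refine ⟨y⁻¹ * x, x * y⁻¹, isConj_of_semiconjBy hx (mul_assoc _ _ _).symm, hcomm, fun heq => ?_⟩
  have hcomm' : Commute x y⁻¹ := heq.symm
  exact hxy (Commute.inv_right_iff₀.mp hcomm')

theorem HasCommutingConjugates.of_pow_three_mem_center {a : D} (ha : a ∉ Set.center D)
    (ha3 : a ^ 3 ∈ Set.center D) : HasCommutingConjugates D := by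
  obtain ⟨y, z, hconj, hsum, hprod⟩ :=
    exists_isConj_cubic_factorization ha Set.zero_mem_center Set.zero_mem_center ha3 (by simp)
  have hquad : a ^ 2 + a * y + y ^ 2 = 0 := by
    linear_combination (norm := noncomm_ring) hsum * (a + y) - hprod
  by_cases hay : Commute a y
  · rcases eq_or_ne a y with rfl | hne
    · have ha0 : a ≠ 0 := by rintro rfl; exact ha Set.zero_mem_center
      have h3 : (3 : D) * a ^ 2 = 0 := by rw [← hquad]; noncomm_ring
      have : CharP D 3 := (CharP.charP_iff_prime_eq_zero Nat.prime_three).mpr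
        (by simpa [ha0] using h3)
      exact .of_pow_char_mem_center 3 ha ha3
    · exact ⟨a, y, hconj, hay, hne⟩
  · exact .of_sq_add_mul_add_sq_eq_zero hay hquad

end CommutingConjugates

section AdjoinSingleton

variable {R A : Type*} [CommSemiring R] [Semiring A] [Algebra R A] {x y : A}

theorem adjoin_singleton_ne_bot (hx : x ∉ Set.center A) : Algebra.adjoin R {x} ≠ ⊥ := fun h => by
  obtain ⟨r, rfl⟩ := Algebra.mem_bot.mp (h ▸ Algebra.self_mem_adjoin_singleton R x)
  exact hx (Set.algebraMap_mem_center r)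

theorem adjoin_singleton_ne_top (hx : x ∉ Set.center A) : Algebra.adjoin R {x} ≠ ⊤ := fun h =>
  hx <| Semigroup.mem_center_iff.mpr fun y =>
    (Algebra.commute_of_mem_adjoin_self (h ▸ Algebra.mem_top : y ∈ Algebra.adjoin R {x})).symm

theorem exists_algEquiv_adjoin_singleton_ne_one (hconj : IsConj x y) (hne : x ≠ y)
    (hadj : Algebra.adjoin R {x} = Algebra.adjoin R {y}) :
    ∃ σ : Algebra.adjoin R {x} ≃ₐ[R] Algebra.adjoin R {x}, σ ≠ 1 := by
  obtain ⟨u, hu⟩ := hconj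
  let φ : A ≃ₐ[R] A := MulSemiringAction.toAlgEquiv R A (ConjAct.toConjAct u)
  have hφx : φ x = y := by
    change (u : A) * x * ↑u⁻¹ = y
    rw [hu.eq, Units.mul_inv_cancel_right]
  have hmap : (Algebra.adjoin R {x}).map (φ : A →ₐ[R] A) = Algebra.adjoin R {x} := by
    rw [AlgHom.map_adjoin_singleton, hadj]
    exact congrArg (fun z => Algebra.adjoin R {z}) hφx
  refine ⟨(φ.subalgebraMap _).trans (Subalgebra.equivOfEq _ _ hmap), fun h1 => hne ?_⟩
  have hx := congrArg Subtype.val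
    (AlgEquiv.congr_fun h1 ⟨x, Algebra.self_mem_adjoin_singleton R x⟩)
  exact hx.symm.trans hφx

end AdjoinSingleton

section FieldAlgebra

variable {k : Type*} [Field k]

theorem finrank_adjoin_singleton_eq_natDegree_minpoly {A : Type*} [Ring A] [Algebra k A] (x : A) :
    Module.finrank k (Algebra.adjoin k {x}) = (minpoly k x).natDegree := by
  have e : (k[X] ⧸ Ideal.span {minpoly k x}) ≃ₐ[k] Algebra.adjoin k {x} :=
    (Ideal.quotientEquivAlgOfEq k (minpoly.ker_aeval_eq_span_minpoly k x).symm).trans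
      ((Ideal.quotientKerEquivRange (aeval (R := k) x)).trans
        (Subalgebra.equivOfEq _ _ (Algebra.adjoin_singleton_eq_range_aeval k x).symm))
  rw [← finrank_quotient_span_eq_natDegree, e.toLinearEquiv.finrank_eq]

theorem aeval_derivative_minpoly_ne_zero {A : Type*} [Ring A] [Nontrivial A] [Algebra k A] {x : A}
    (hsep : IsSeparable k x) : aeval x (derivative (minpoly k x)) ≠ 0 := fun h =>
  minpoly.not_isUnit k x (hsep.isUnit_of_dvd' dvd_rfl (minpoly.dvd k x h))

theorem exists_eq_cubic_of_natDegree_eq_three {R : Type*} [CommRing R] {P : R[X]}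
    (hP : P.Monic) (h3 : P.natDegree = 3) :
    ∃ s c n : R, P = X ^ 3 - C s * X ^ 2 + C c * X - C n := by
  refine ⟨-P.coeff 2, P.coeff 1, -P.coeff 0, ?_⟩
  conv_lhs => rw [hP.as_sum, h3]
  simp only [Finset.sum_range_succ, Finset.sum_range_zero, map_neg]
  ring

theorem isField_of_forall_commute {A : Type*} [Ring A] [IsDomain A] [Algebra k A]
    [FiniteDimensional k A] (hcomm : ∀ a b : A, Commute a b) : IsField A :=
  letI := divisionRingOfFiniteDimensional k A
  ⟨exists_pair_ne A, hcomm, fun ha => ⟨_, mul_inv_cancel₀ ha⟩⟩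

theorem isGalois_and_isCyclic_of_prime_finrank {L : Type*} [Field L] [Algebra k L]
    (hL : (Module.finrank k L).Prime) {σ : L ≃ₐ[k] L} (hσ : σ ≠ 1) :
    IsGalois k L ∧ IsCyclic (L ≃ₐ[k] L) := by
  have : FiniteDimensional k L := Module.finite_of_finrank_pos hL.pos
  have hdvd : Nat.card (L ≃ₐ[k] L) ∣ Module.finrank k L := by
    rw [← Subgroup.card_top, ← IntermediateField.finrank_fixedField_eq_card]
    exact Dvd.intro_left _
      (Module.finrank_mul_finrank k (IntermediateField.fixedField (⊤ : Subgroup (L ≃ₐ[k] L))) L)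
  have : Nontrivial (L ≃ₐ[k] L) := ⟨σ, 1, hσ⟩
  have hcard := (hL.eq_one_or_self_of_dvd _ hdvd).resolve_left Finite.one_lt_card.ne'
  have := Fact.mk hL
  exact ⟨.of_card_aut_eq_finrank k L hcard, isCyclic_of_prime_card hcard⟩

end FieldAlgebra

section PrimeSq

variable {k D : Type*} [Field k] [DivisionRing D] [Algebra k D] {p : ℕ} [hp : Fact p.Prime]

theorem finrank_subalgebra_eq_of_finrank_eq_prime_sq (hD : Module.finrank k D = p ^ 2)
    {S : Subalgebra k D} (hbot : S ≠ ⊥) (htop : S ≠ ⊤) : Module.finrank k S = p := by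
  have : FiniteDimensional k D := Module.finite_of_finrank_pos (hD ▸ pow_pos hp.out.pos 2)
  let := divisionRingOfFiniteDimensional k S
  have hdvd : Module.finrank k S ∣ p ^ 2 := ⟨_, hD ▸ (Module.finrank_mul_finrank k S D).symm⟩
  obtain ⟨i, hi, hSi⟩ := (Nat.dvd_prime_pow hp.out).mp hdvd
  interval_cases i
  · exact absurd (Subalgebra.finrank_eq_one_iff.mp hSi) hbot
  · rw [hSi, pow_one]
  · refine absurd (Subalgebra.eq_of_le_of_finrank_eq le_top ?_) htop
    rw [hSi, ← hD, subalgebra_top_finrank_eq_submodule_top_finrank, finrank_top]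

theorem finrank_adjoin_singleton_eq (hD : Module.finrank k D = p ^ 2) {x : D}
    (hx : x ∉ Set.center D) : Module.finrank k (Algebra.adjoin k {x}) = p :=
  finrank_subalgebra_eq_of_finrank_eq_prime_sq hD (adjoin_singleton_ne_bot hx)
    (adjoin_singleton_ne_top hx)

theorem adjoin_singleton_eq_centralizer (hD : Module.finrank k D = p ^ 2) {x : D}
    (hx : x ∉ Set.center D) : Algebra.adjoin k {x} = Subalgebra.centralizer k {x} := by
  have : FiniteDimensional k D := Module.finite_of_finrank_pos (hD ▸ pow_pos hp.out.pos 2)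
  have hle : Algebra.adjoin k {x} ≤ Subalgebra.centralizer k {x} :=
    Algebra.adjoin_singleton_le (by simp [Subalgebra.mem_centralizer_iff])
  have hbot : Algebra.adjoin k {x} ≠ ⊥ := adjoin_singleton_ne_bot hx
  have htop : Subalgebra.centralizer k {x} ≠ ⊤ := fun h => hx <|
    (Subalgebra.centralizer_eq_top_iff_subset k).mp h rfl
  refine Subalgebra.eq_of_le_of_finrank_eq hle ?_
  rw [finrank_subalgebra_eq_of_finrank_eq_prime_sq hD hbot (ne_top_of_le_ne_top htop hle),
    finrank_subalgebra_eq_of_finrank_eq_prime_sq hD (ne_bot_of_le_ne_bot hbot hle) htop]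

theorem mem_adjoin_singleton_of_commute (hD : Module.finrank k D = p ^ 2) {x y : D}
    (hx : x ∉ Set.center D) (hxy : Commute x y) : y ∈ Algebra.adjoin k {x} := by
  rw [adjoin_singleton_eq_centralizer hD hx, Subalgebra.mem_centralizer_iff]
  rintro _ rfl
  exact hxy

theorem mem_center_of_commute_of_not_commute (hD : Module.finrank k D = p ^ 2) {x y z : D}
    (hxy : ¬Commute x y) (hzx : Commute z x) (hzy : Commute z y) : z ∈ Set.center D := by
  by_contra hz
  have hy := mem_adjoin_singleton_of_commute hD hz hzy
  exact hxy (Algebra.commute_of_mem_adjoin_singleton_of_commute hy hzx.symm)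

end PrimeSq

theorem HasCommutingConjugates.exists_cyclic_subfield {k D : Type*} [Field k] [DivisionRing D]
    [Algebra k D] {p : ℕ} [hp : Fact p.Prime] (h : HasCommutingConjugates D)
    (hD : Module.finrank k D = p ^ 2) :
    ∃ L : Subalgebra k D, (∀ x ∈ L, ∀ y ∈ L, x * y = y * x) ∧
      ∃ hF : IsField L, Module.finrank k L = p ∧
        (letI : Field L := hF.toField
         IsGalois k L ∧ IsCyclic (L ≃ₐ[k] L)) := by
  obtain ⟨x, y, hconj, hxy, hne⟩ := h
  have hx : x ∉ Set.center D := fun hx => hne (hconj.eq_of_left_mem_center hx)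
  have hy : y ∉ Set.center D := fun hy => hne (hconj.eq_of_right_mem_center hy)
  have : FiniteDimensional k D := Module.finite_of_finrank_pos (hD ▸ pow_pos hp.out.pos 2)
  have hcomm : ∀ a ∈ Algebra.adjoin k {x}, ∀ b ∈ Algebra.adjoin k {x}, a * b = b * a :=
    fun a ha b hb => Algebra.commute_of_mem_adjoin_singleton_of_commute hb
      (Algebra.commute_of_mem_adjoin_self ha).symm
  have hF : IsField (Algebra.adjoin k {x}) := isField_of_forall_commute (k := k)
    fun a b => Subtype.ext (hcomm a a.2 b b.2)
  have hfin := finrank_adjoin_singleton_eq hD hx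
  have hadj : Algebra.adjoin k {x} = Algebra.adjoin k {y} := le_antisymm
    (Algebra.adjoin_singleton_le (mem_adjoin_singleton_of_commute hD hy hxy.symm))
    (Algebra.adjoin_singleton_le (mem_adjoin_singleton_of_commute hD hx hxy))
  obtain ⟨σ, hσ⟩ := exists_algEquiv_adjoin_singleton_ne_one (R := k) hconj hne hadj
  refine ⟨_, hcomm, hF, hfin, ?_⟩
  let : Field (Algebra.adjoin k {x}) := hF.toField
  exact isGalois_and_isCyclic_of_prime_finrank (hfin.symm ▸ hp.out) hσ

section Cubic

variable {k D : Type*} [Field k] [DivisionRing D] [Algebra k D]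

theorem exists_cubic_factorization_of_isSeparable (hD : Module.finrank k D = 3 ^ 2) {x : D}
    (hx : x ∉ Set.center D) (hsep : IsSeparable k x) :
    ∃ y z, IsConj x y ∧ x ≠ y ∧ x + y + z ∈ Set.center D ∧
      y * x + z * x + z * y ∈ Set.center D := by
  have : FiniteDimensional k D := Module.finite_of_finrank_pos (by simp [hD])
  have : Fact (Nat.Prime 3) := ⟨Nat.prime_three⟩
  obtain ⟨s, c, n, hP⟩ := exists_eq_cubic_of_natDegree_eq_three
    (minpoly.monic (IsIntegral.of_finite k x))
    ((finrank_adjoin_singleton_eq_natDegree_minpoly x).symm.trans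
      (finrank_adjoin_singleton_eq hD hx))
  have hroot := minpoly.aeval k x
  rw [hP] at hroot
  simp only [map_sub, map_add, map_mul, map_pow, aeval_X, aeval_C] at hroot
  have halg (r : k) : algebraMap k D r ∈ Set.center D := Set.algebraMap_mem_center r
  obtain ⟨y, z, hconj, hsum, hprod⟩ :=
    exists_isConj_cubic_factorization hx (halg s) (halg c) (halg n) hroot
  refine ⟨y, z, hconj, ?_, hsum ▸ halg s, hprod ▸ halg c⟩
  rintro rfl
  refine aeval_derivative_minpoly_ne_zero hsep ?_
  have hderiv : derivative (minpoly k x) = 3 * X ^ 2 - C s * (2 * X) + C c := by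
    simp only [hP, derivative_sub, derivative_add, derivative_C_mul, derivative_X_pow, derivative_X,
      derivative_C, Nat.cast_ofNat, map_ofNat]
    ring
  rw [hderiv]
  simp only [map_sub, map_add, map_mul, map_pow, map_ofNat, aeval_X, aeval_C, ← hsum, ← hprod]
  noncomm_ring

theorem hasCommutingConjugates_of_finrank_eq [Algebra.IsCentral k D]
    (hD : Module.finrank k D = 3 ^ 2) : HasCommutingConjugates D := by
  have : FiniteDimensional k D := Module.finite_of_finrank_pos (by simp [hD])
  have : Fact (Nat.Prime 3) := ⟨Nat.prime_three⟩
  obtain ⟨x, hx, hsep⟩ := JacobsonNoether.exists_separable_and_not_isCentral'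
    (mt Subalgebra.bot_eq_top_iff_finrank_eq_one.mp (by simp [hD]) : (⊥ : Subalgebra k D) ≠ ⊤)
  rw [← Algebra.IsCentral.center_eq_bot k D] at hx
  obtain ⟨y, z, hconj, hne, hsum, hprod⟩ := exists_cubic_factorization_of_isSeparable hD hx hsep
  by_cases hxy : Commute x y
  · exact ⟨x, y, hconj, hxy, hne⟩
  · obtain ⟨hax, hay⟩ := commute_commutator_pow_three hsum hprod
    have ha : x * y - y * x ∉ Set.center D := fun ha => by
      have h0 : x * y - y * x ≠ 0 := sub_ne_zero.mpr hxy
      have h1 := (semiconjBy_commutator_of_mem_center hsum hprod).1.eq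
      rw [← Semigroup.mem_center_iff.mp ha x] at h1
      exact hne (mul_right_cancel₀ h0 h1)
    exact .of_pow_three_mem_center ha (mem_center_of_commute_of_not_commute hD hxy hax hay)

end Cubic

/-- **Wedderburn's theorem** for degree 3 central division algebras:
if `D` is a division ring that is an algebra over a field `k`, with center exactly
`k·1` and `dim_k D = 9`, then `D` contains a cyclic cubic subfield, i.e. a commutative
`k`-subalgebra `L` which is a field of dimension 3 over `k` such that `L/k` is Galois
with cyclic Galois group. -/
theorem albert_stmt0 (k : Type*) [Field k] (D : Type*) [DivisionRing D] [Algebra k D]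
    (hcenter : Subalgebra.center k D = ⊥) (hdim : Module.finrank k D = 9) :
    ∃ L : Subalgebra k D,
      (∀ x ∈ L, ∀ y ∈ L, x * y = y * x) ∧
      ∃ hF : IsField L,
        Module.finrank k L = 3 ∧
        (letI : Field L := hF.toField
         IsGalois k L ∧ IsCyclic (L ≃ₐ[k] L)) := by
  have : Algebra.IsCentral k D := ⟨hcenter.le⟩
  have : Fact (Nat.Prime 3) := ⟨Nat.prime_three⟩
  exact (hasCommutingConjugates_of_finrank_eq (k := k) hdim).exists_cyclic_subfield hdim
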